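/- arXiv:2009.09221 — 2 statements merged into one kernel-verified Lean document; each statement's English description precedes it below -/
import Mathlib

section
/- Let G be a countably infinite, locally finite, strongly connected directed graph and let M ⊆ V(G) be nonempty with M ≠ V(G). Then the following are equivalent: (1) M lies in the eventual image ⋂_{n≥1} φ_G^n(𝒫(V(G))); (2) for every r ∈ ℕ there is M' ⊆ M with M = φ_G^r(M'); (3) M is a union of horoballs in G; (4) M is a union of Busemann balls in G. -/
/-!
Write `B r u = φ^r {u}`. Since `φ^r` commutes with unions, its image consists of the unions of balls
of radius `r`, and the eventual image of those sets that are such unions for every `r`.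

Being a union of balls of radius `r` survives limits: if `v` lies in the limit, then each set far
out in the sequence contains a ball `B r u ∋ v`, and as there are finitely many candidates for `u`,
one of them serves infinitely often. Hence horoballs, being limits of balls of unbounded radius, lie
in the eventual image. A Busemann ball is the increasing union of the balls `B r (γ r)`, so it is a
horoball.

Conversely let `M` be in the eventual image, `v ∈ M`, and let `x ∉ M` be reachable from `v`. The
centre of a large ball with `v ∈ B r u ⊆ M` is far from `x`, hence far from `v`. Shrinking the ball
until `v` is on its boundary and moving the centre along a shortest path to `v` produces, for every
`n`, a centre at distance exactly `n` to `v` of a ball of radius `n` inside `M`. For each `n` there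
are only finitely many such centres, so Kőnig's lemma strings them together to a geodesic ray `γ`
with `γ 0 = v`, and its Busemann ball contains `v` and lies in `M`.
-/

open Filter Set

/-- The map `φ_G` on subsets of the vertex set of a directed graph with edge
relation `E`: `φ_G(W) = W ∪ {v : ∃ w ∈ W, (w,v) ∈ E}`. -/
def phiG {V : Type*} (E : V → V → Prop) (W : Set V) : Set V :=
  W ∪ {v | ∃ w ∈ W, E w v}

/-- A directed graph is locally finite if every vertex has finitely many
out-neighbors and finitely many in-neighbors. -/
def LocallyFiniteGraph {V : Type*} (E : V → V → Prop) : Prop :=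
  ∀ v : V, {w | E v w}.Finite ∧ {w | E w v}.Finite

/-- A directed graph is strongly connected if every vertex is reachable from
every other vertex by a directed path. -/
def StronglyConnectedGraph {V : Type*} (E : V → V → Prop) : Prop :=
  ∀ v w : V, ∃ n : ℕ, w ∈ (phiG E)^[n] {v}

/-- Convergence of a sequence of subsets in the product topology on
`{0,1}^V`: for every vertex, membership eventually agrees with the limit. -/
def ConvergesTo {V : Type*} (s : ℕ → Set V) (S : Set V) : Prop :=
  ∀ v : V, ∀ᶠ i in atTop, (v ∈ s i ↔ v ∈ S)

/-- A horoball: a nonempty proper subset of `V` which is a limit of balls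
`φ_G^{n_i}({c_i})` with radii `n_i → ∞`. -/
def IsHoroball {V : Type*} (E : V → V → Prop) (H : Set V) : Prop :=
  H.Nonempty ∧ H ≠ univ ∧
    ∃ (c : ℕ → V) (n : ℕ → ℕ), Tendsto n atTop atTop ∧
      ConvergesTo (fun i => (phiG E)^[n i] {c i}) H

/-- A geodesic ray: a sequence `γ` of vertices such that for `i > j` the
shortest directed path from `γ i` to `γ j` has length exactly `i - j`. -/
def IsGeodesicRay {V : Type*} (E : V → V → Prop) (γ : ℕ → V) : Prop :=
  ∀ i j : ℕ, j < i →
    γ j ∈ (phiG E)^[i - j] {γ i} ∧ ∀ n : ℕ, γ j ∈ (phiG E)^[n] {γ i} → i - j ≤ n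

/-- A Busemann ball: a set of the form `⋃ r, φ_G^r({γ r})` for a geodesic ray
`γ`, which is neither empty nor the whole vertex set. -/
def IsBusemannBall {V : Type*} (E : V → V → Prop) (B : Set V) : Prop :=
  B ≠ ∅ ∧ B ≠ univ ∧
    ∃ γ : ℕ → V, IsGeodesicRay E γ ∧ B = ⋃ r : ℕ, (phiG E)^[r] {γ r}

section Konig

open CategoryTheory Opposite

lemma exists_seq_forall_apply_succ_eq {α : ℕ → Type*} [∀ n, Finite (α n)] [∀ n, Nonempty (α n)]
    (f : ∀ n, α (n + 1) → α n) : ∃ s : ∀ n, α n, ∀ n, f n (s (n + 1)) = s n := by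
  let F := Functor.ofOpSequence fun n => TypeCat.ofHom (f n)
  have : ∀ n, Finite (F.obj n) := fun n => inferInstanceAs (Finite (α n.unop))
  have : ∀ n, Nonempty (F.obj n) := fun n => inferInstanceAs (Nonempty (α n.unop))
  obtain ⟨s, hs⟩ := nonempty_sections_of_finite_cofiltered_system F
  refine ⟨fun n => s (op n), fun n => ?_⟩
  have hsn := hs (homOfLE (Nat.le_add_right n 1)).op
  rwa [Functor.ofOpSequence_map_homOfLE_succ] at hsn

end Konig

section Balls

variable {V : Type*} {E : V → V → Prop} {m n : ℕ} {u v w : V} {W : Set V}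

lemma monotone_phiG : Monotone (phiG E) := by
  rintro W W' h v (hv | ⟨w, hw, hwv⟩)
  · exact Or.inl (h hv)
  · exact Or.inr ⟨w, h hw, hwv⟩

lemma monotone_iterate_phiG_apply (W : Set V) : Monotone fun n => (phiG E)^[n] W :=
  fun _ _ h => Function.monotone_iterate_of_id_le (fun _ => subset_union_left) h W

lemma subset_iterate_phiG (n : ℕ) (W : Set V) : W ⊆ (phiG E)^[n] W :=
  monotone_iterate_phiG_apply W n.zero_le

lemma iterate_phiG_singleton_subset (h : w ∈ W) : (phiG E)^[n] {w} ⊆ (phiG E)^[n] W :=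
  monotone_phiG.iterate n (singleton_subset_iff.2 h)

lemma mem_iterate_phiG : v ∈ (phiG E)^[n] W ↔ ∃ w ∈ W, v ∈ (phiG E)^[n] {w} := by
  refine ⟨fun h => ?_, fun ⟨w, hw, h⟩ => iterate_phiG_singleton_subset hw h⟩
  induction n generalizing v with
  | zero => exact ⟨v, h, rfl⟩
  | succ n ih =>
    simp only [Function.iterate_succ_apply'] at h ⊢
    rcases h with hv | ⟨u, hu, huv⟩
    · obtain ⟨w, hw, h⟩ := ih hv
      exact ⟨w, hw, Or.inl h⟩
    · obtain ⟨w, hw, h⟩ := ih hu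
      exact ⟨w, hw, Or.inr ⟨u, h, huv⟩⟩

lemma mem_iterate_phiG_add :
    v ∈ (phiG E)^[m + n] W ↔ ∃ u ∈ (phiG E)^[m] W, v ∈ (phiG E)^[n] {u} := by
  rw [add_comm, Function.iterate_add_apply, mem_iterate_phiG]

lemma iterate_phiG_singleton_subset_add (h : u ∈ (phiG E)^[m] W) :
    (phiG E)^[n] {u} ⊆ (phiG E)^[m + n] W :=
  fun _ hv => mem_iterate_phiG_add.2 ⟨u, h, hv⟩

lemma finite_setOf_mem_iterate_phiG_singleton (hfin : ∀ v, {w | E w v}.Finite) (n : ℕ) (v : V) :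
    {u | v ∈ (phiG E)^[n] {u}}.Finite := by
  induction n generalizing v with
  | zero => exact (finite_singleton v).subset fun u hu => (mem_singleton_iff.1 hu).symm
  | succ n ih =>
    refine ((ih v).union ((hfin v).biUnion fun w _ => ih w)).subset fun u hu => ?_
    rw [mem_ofPred_eq, Function.iterate_succ_apply'] at hu
    rcases hu with hu | ⟨w, hw, hwv⟩
    · exact Or.inl hu
    · exact Or.inr (mem_biUnion (mem_ofPred_eq ▸ hwv) hw)

end Balls

section Range

variable {V : Type*} {E : V → V → Prop} {r : ℕ}

lemma mem_range_iterate_phiG_iff {M : Set V} :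
    M ∈ range (phiG E)^[r] ↔ ∀ v ∈ M, ∃ u, v ∈ (phiG E)^[r] {u} ∧ (phiG E)^[r] {u} ⊆ M := by
  constructor
  · rintro ⟨W, rfl⟩ v hv
    obtain ⟨u, hu, huv⟩ := mem_iterate_phiG.1 hv
    exact ⟨u, huv, iterate_phiG_singleton_subset hu⟩
  · refine fun h => ⟨{u | (phiG E)^[r] {u} ⊆ M}, Subset.antisymm (fun v hv => ?_) fun v hv => ?_⟩
    · obtain ⟨u, hu, huv⟩ := mem_iterate_phiG.1 hv
      exact hu huv
    · obtain ⟨u, huv, hu⟩ := h v hv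
      exact mem_iterate_phiG.2 ⟨u, hu, huv⟩

lemma antitone_range_iterate_phiG : Antitone fun r => range (phiG E)^[r] := by
  rintro m n hmn _ ⟨W, rfl⟩
  exact ⟨(phiG E)^[n - m] W, by rw [← Function.iterate_add_apply, Nat.add_sub_cancel' hmn]⟩

lemma sUnion_mem_range_iterate_phiG {𝓢 : Set (Set V)} (h : ∀ H ∈ 𝓢, H ∈ range (phiG E)^[r]) :
    ⋃₀ 𝓢 ∈ range (phiG E)^[r] := by
  refine mem_range_iterate_phiG_iff.2 fun v ⟨H, hH, hv⟩ => ?_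
  obtain ⟨u, huv, hu⟩ := mem_range_iterate_phiG_iff.1 (h H hH) v hv
  exact ⟨u, huv, hu.trans (subset_sUnion_of_mem hH)⟩

lemma ConvergesTo.mem_range_iterate_phiG (hfin : ∀ v, {w | E w v}.Finite) {s : ℕ → Set V}
    {S : Set V} (hS : ConvergesTo s S) (hs : ∃ᶠ i in atTop, s i ∈ range (phiG E)^[r]) :
    S ∈ range (phiG E)^[r] := by
  refine mem_range_iterate_phiG_iff.2 fun v hv => ?_
  have hball : ∃ᶠ i in atTop, ∃ u ∈ {u | v ∈ (phiG E)^[r] {u}}, (phiG E)^[r] {u} ⊆ s i :=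
    (hs.and_eventually (hS v)).mono fun i ⟨hi, hvi⟩ =>
      mem_range_iterate_phiG_iff.1 hi v (hvi.2 hv)
  obtain ⟨u, huv, hu⟩ :=
    (finite_setOf_mem_iterate_phiG_singleton hfin r v).frequently_exists.1 hball
  refine ⟨u, huv, fun w hw => ?_⟩
  obtain ⟨i, hi, hwi⟩ := (hu.and_eventually (hS w)).exists
  exact hwi.1 (hi hw)

lemma IsHoroball.mem_range_iterate_phiG (hfin : ∀ v, {w | E w v}.Finite) {H : Set V}
    (hH : IsHoroball E H) (r : ℕ) : H ∈ range (phiG E)^[r] := by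
  obtain ⟨-, -, c, n, hn, hc⟩ := hH
  exact hc.mem_range_iterate_phiG hfin <| (hn.eventually_ge_atTop r).frequently.mono
    fun i hi => antitone_range_iterate_phiG hi (mem_range_self {c i})

end Range

section Busemann

variable {V : Type*} {E : V → V → Prop} {γ : ℕ → V}

lemma convergesTo_iUnion_of_monotone {s : ℕ → Set V} (hs : Monotone s) :
    ConvergesTo s (⋃ i, s i) := by
  intro v
  by_cases hv : v ∈ ⋃ i, s i
  · obtain ⟨i, hi⟩ := mem_iUnion.1 hv
    exact (eventually_ge_atTop i).mono fun j hij => iff_of_true (hs hij hi) hv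
  · exact .of_forall fun i => iff_of_false (fun hi => hv (mem_iUnion_of_mem i hi)) hv

lemma IsGeodesicRay.monotone_iterate_phiG (hγ : IsGeodesicRay E γ) :
    Monotone fun r => (phiG E)^[r] {γ r} := by
  refine monotone_nat_of_le_succ fun r => ?_
  have hstep : γ r ∈ (phiG E)^[1] {γ (r + 1)} := by simpa using (hγ (r + 1) r r.lt_succ_self).1
  simpa only [add_comm 1 r] using
    iterate_phiG_singleton_subset_add (n := r) hstep

lemma IsBusemannBall.isHoroball {B : Set V} (hB : IsBusemannBall E B) : IsHoroball E B := by
  obtain ⟨hne, huniv, γ, hγ, rfl⟩ := hB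
  exact ⟨nonempty_iff_ne_empty.2 hne, huniv, γ, id, tendsto_id,
    convergesTo_iUnion_of_monotone hγ.monotone_iterate_phiG⟩

lemma mem_iterate_phiG_of_forall_mem_succ (hγ : ∀ n, γ n ∈ (phiG E)^[1] {γ (n + 1)}) (m d : ℕ) :
    γ m ∈ (phiG E)^[d] {γ (m + d)} := by
  induction d with
  | zero => exact rfl
  | succ d ih =>
    rw [add_comm d 1, ← add_assoc, add_right_comm]
    exact iterate_phiG_singleton_subset_add (hγ (m + d)) ih

lemma isGeodesicRay_of_forall_mem_succ (hγ : ∀ n, γ n ∈ (phiG E)^[1] {γ (n + 1)})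
    (hdist : ∀ n m, γ 0 ∈ (phiG E)^[m] {γ n} → n ≤ m) : IsGeodesicRay E γ := by
  intro i j hji
  refine ⟨?_, fun n hn => ?_⟩
  · simpa only [Nat.add_sub_cancel' hji.le] using mem_iterate_phiG_of_forall_mem_succ hγ j (i - j)
  · have hj : γ 0 ∈ (phiG E)^[j] {γ j} := by
      simpa only [zero_add] using mem_iterate_phiG_of_forall_mem_succ hγ 0 j
    have hi := hdist i (n + j) (iterate_phiG_singleton_subset_add hn hj)
    lia

end Busemann

section TangentCenters

variable {V : Type*} {E : V → V → Prop} {M : Set V} {u v x : V} {k n : ℕ}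

/-- The centres of the balls of radius `n` that lie in `M` and have `v` on their boundary sphere:
the distance from the centre to `v`, expressed by `IsLeast` as `v` may be unreachable, is exactly
`n`. They are the possible `n`-th vertices of a geodesic ray `γ` with `γ 0 = v` whose Busemann
ball lies in `M`. -/
def tangentCenters (E : V → V → Prop) (M : Set V) (v : V) (n : ℕ) : Set V :=
  {u | IsLeast {m | v ∈ (phiG E)^[m] {u}} n ∧ (phiG E)^[n] {u} ⊆ M}

lemma finite_tangentCenters (hfin : ∀ v, {w | E w v}.Finite) (M : Set V) (v : V) (n : ℕ) :
    (tangentCenters E M v n).Finite :=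
  (finite_setOf_mem_iterate_phiG_singleton hfin n v).subset fun _ hu => hu.1.1

lemma exists_mem_tangentCenters_of_add (hu : u ∈ tangentCenters E M v (n + k)) :
    ∃ u' ∈ tangentCenters E M v n, u' ∈ (phiG E)^[k] {u} := by
  rw [add_comm] at hu
  obtain ⟨⟨hv, hmin⟩, hM⟩ := hu
  obtain ⟨u', hu', hvu'⟩ := mem_iterate_phiG_add.1 hv
  refine ⟨u', ⟨⟨hvu', fun m hm => ?_⟩, (iterate_phiG_singleton_subset_add hu').trans hM⟩, hu'⟩
  exact Nat.add_le_add_iff_left.1 (hmin (iterate_phiG_singleton_subset_add hu' hm))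

lemma tangentCenters_nonempty (hM : ∀ r, M ∈ range (phiG E)^[r]) (hv : v ∈ M) (hx : x ∉ M)
    (hvx : ∃ d, x ∈ (phiG E)^[d] {v}) (n : ℕ) : (tangentCenters E M v n).Nonempty := by
  classical
  obtain ⟨d, hd⟩ := hvx
  obtain ⟨u, hvu, huM⟩ := mem_range_iterate_phiG_iff.1 (hM (n + d)) v hv
  have hreach : ∃ m, v ∈ (phiG E)^[m] {u} := ⟨_, hvu⟩
  have hleast := Nat.isLeast_find hreach
  set l := Nat.find hreach
  have hnl : n ≤ l := by
    by_contra! hlt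
    exact hx (huM (monotone_iterate_phiG_apply {u} (by lia)
      (iterate_phiG_singleton_subset_add hleast.1 hd)))
  have hu : u ∈ tangentCenters E M v (n + (l - n)) := by
    rw [Nat.add_sub_cancel' hnl]
    exact ⟨hleast, (monotone_iterate_phiG_apply {u} (hleast.2 hvu)).trans huM⟩
  obtain ⟨u', hu', -⟩ := exists_mem_tangentCenters_of_add hu
  exact ⟨u', hu'⟩

lemma exists_geodesicRay_mem_tangentCenters (hfin : ∀ v, {w | E w v}.Finite)
    (hne : ∀ n, (tangentCenters E M v n).Nonempty) :
    ∃ γ, IsGeodesicRay E γ ∧ γ 0 = v ∧ ∀ n, γ n ∈ tangentCenters E M v n := by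
  have (n : ℕ) : Finite (tangentCenters E M v n) := finite_tangentCenters hfin M v n
  have (n : ℕ) : Nonempty (tangentCenters E M v n) := (hne n).to_subtype
  have hparent (n : ℕ) (u : tangentCenters E M v (n + 1)) :
      ∃ u' : tangentCenters E M v n, (u' : V) ∈ (phiG E)^[1] {(u : V)} := by
    obtain ⟨u', hu', h⟩ := exists_mem_tangentCenters_of_add u.2
    exact ⟨⟨u', hu'⟩, h⟩
  choose parent hparent using hparent
  obtain ⟨s, hs⟩ := exists_seq_forall_apply_succ_eq (α := fun n => tangentCenters E M v n) parent
  have hzero : (s 0 : V) = v := (mem_singleton_iff.1 (s 0).2.1.1).symm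
  refine ⟨fun n => s n, isGeodesicRay_of_forall_mem_succ (fun n => ?_) (fun n m hm => ?_), hzero,
    fun n => (s n).2⟩
  · simpa only [hs] using hparent n (s (n + 1))
  · rw [hzero] at hm
    exact (s n).2.1.2 hm

lemma exists_isBusemannBall_subset (hfin : ∀ v, {w | E w v}.Finite)
    (hM : ∀ r, M ∈ range (phiG E)^[r]) (hv : v ∈ M) (hx : x ∉ M)
    (hvx : ∃ d, x ∈ (phiG E)^[d] {v}) : ∃ B, IsBusemannBall E B ∧ B ⊆ M ∧ v ∈ B := by
  obtain ⟨γ, hγ, hzero, hmem⟩ :=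
    exists_geodesicRay_mem_tangentCenters hfin (tangentCenters_nonempty hM hv hx hvx)
  have hvB : v ∈ ⋃ r, (phiG E)^[r] {γ r} := mem_iUnion_of_mem 0 hzero.symm
  have hBM : ⋃ r, (phiG E)^[r] {γ r} ⊆ M := iUnion_subset fun r => (hmem r).2
  have hxB : x ∉ ⋃ r, (phiG E)^[r] {γ r} := notMem_subset hBM hx
  exact ⟨_, ⟨ne_of_mem_of_not_mem' hvB (notMem_empty v),
    (ne_univ_iff_exists_notMem _).2 ⟨x, hxB⟩, γ, hγ, rfl⟩, hBM, hvB⟩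

end TangentCenters

theorem eventual_image_tfae_general {V : Type*} {E : V → V → Prop} {M : Set V}
    (hfin : ∀ v, {w | E w v}.Finite) (hescape : ∀ v ∈ M, ∃ x ∉ M, ∃ d, x ∈ (phiG E)^[d] {v}) :
    List.TFAE
      [∀ n : ℕ, 1 ≤ n → ∃ W : Set V, (phiG E)^[n] W = M,
       ∀ r : ℕ, ∃ M' ⊆ M, M = (phiG E)^[r] M',
       ∃ 𝓢 : Set (Set V), (∀ H ∈ 𝓢, IsHoroball E H) ∧ M = ⋃₀ 𝓢,
       ∃ 𝓢 : Set (Set V), (∀ B ∈ 𝓢, IsBusemannBall E B) ∧ M = ⋃₀ 𝓢] := by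
  tfae_have 1 → 2 := by
    intro h r
    obtain ⟨W, rfl⟩ := h (r + 1) r.succ_pos
    exact ⟨phiG E W, subset_iterate_phiG r (phiG E W), rfl⟩
  tfae_have 2 → 4 := by
    intro h
    have hM (r : ℕ) : M ∈ range (phiG E)^[r] := (h r).imp fun _ hM' => hM'.2.symm
    refine ⟨{B | IsBusemannBall E B ∧ B ⊆ M}, fun B hB => hB.1,
      Subset.antisymm (fun v hv => ?_) (sUnion_subset fun B hB => hB.2)⟩
    obtain ⟨x, hx, hvx⟩ := hescape v hv
    obtain ⟨B, hB, hBM, hvB⟩ := exists_isBusemannBall_subset hfin hM hv hx hvx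
    exact ⟨B, ⟨hB, hBM⟩, hvB⟩
  tfae_have 4 → 3 := fun ⟨𝓢, h𝓢, hM⟩ => ⟨𝓢, fun B hB => (h𝓢 B hB).isHoroball, hM⟩
  tfae_have 3 → 1 := by
    rintro ⟨𝓢, h𝓢, rfl⟩ n -
    exact sUnion_mem_range_iterate_phiG fun H hH => (h𝓢 H hH).mem_range_iterate_phiG hfin n
  tfae_finish

/-- For a nonempty proper subset `M` of the vertex set of a countably infinite,
locally finite, strongly connected directed graph, the following are
equivalent: (1) `M` lies in the eventual image `⋂_{n ≥ 1} φ_G^n(𝒫(V))`;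
(2) for every `r` there is `M' ⊆ M` with `M = φ_G^r(M')`;
(3) `M` is a union of horoballs; (4) `M` is a union of Busemann balls. -/
theorem eventual_image_tfae {V : Type*} [Countable V] [Infinite V]
    (E : V → V → Prop) (hLF : LocallyFiniteGraph E)
    (hSC : StronglyConnectedGraph E)
    (M : Set V) (hne : M.Nonempty) (hMuniv : M ≠ univ) :
    List.TFAE
      [∀ n : ℕ, 1 ≤ n → ∃ W : Set V, (phiG E)^[n] W = M,
       ∀ r : ℕ, ∃ M' ⊆ M, M = (phiG E)^[r] M',
       ∃ 𝓢 : Set (Set V), (∀ H ∈ 𝓢, IsHoroball E H) ∧ M = ⋃₀ 𝓢,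
       ∃ 𝓢 : Set (Set V), (∀ B ∈ 𝓢, IsBusemannBall E B) ∧ M = ⋃₀ 𝓢] := by
  obtain ⟨x, hx⟩ := (ne_univ_iff_exists_notMem M).1 hMuniv
  exact eventual_image_tfae_general (fun v => (hLF v).2) fun v _ => ⟨x, hx, hSC v x⟩
end

section
/- Let (Γ₁,A₁) and (Γ₂,A₂) be finitely generated groups such that φ_{A₁} : 𝒫(Γ₁) → 𝒫(Γ₁) and φ_{A₂} : 𝒫(Γ₂) → 𝒫(Γ₂) are topologically conjugate. If Γ₁ is amenable, then Γ₂ is amenable. -/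
/-!
A bijection `Φ` intertwining `φ_{A₁}` and `φ_{A₂}` preserves the cardinalities of the fibres of all
iterates, and the `n`-th iterate is `W ↦ W Aⁿ`. Logarithms of fibre cardinalities measure the sizes
of sets, up to constants that do not depend on `n`. A fibre has at most `2 ^ |X|` elements, where
`X` is the union of its members. Conversely, let `E ⊆ C a`, with `1 ≠ a ∈ A`, be maximal such that
`x⁻¹ y ∉ A` for distinct `x, y ∈ E`. Then any part of `E` can be erased from `C A²` without changing
`C A² · A`, and `|C| ≤ K |E|` with `K = |A ∪ A⁻¹|`, so the fibre of the `n`-th iterate over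
`C Aⁿ⁺²` has at least `2 ^ (|C| / K)` elements.

Choose a Følner set `C` of `Γ₁` with `|C A₁ʲ⁺⁵| ≤ 2 |C|`, put `Y = C A₁ʲ⁺⁵`, and let `X` be the
largest set with `X A₂ʲ⁺³ = Φ Y`. Comparing fibres of the iterate of order `j + 3` gives
`|C| ≤ K₁ |X|`. Since `Φ Y = (X A₂ʲ) A₂³`, comparing fibres of `φ` itself gives
`|X A₂ʲ| ≤ K₂ |Y|`. Hence `|X A₂ʲ| ≤ 2 K₁ K₂ |X|` with a constant independent of `j`, so the sizes
`|X A₂ⁱ|` cannot all grow by a fixed factor at each step, and `Γ₂` has Følner sets.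
-/

open Filter Set
open scoped Pointwise

/-- The product (cylinder) topology on `𝒫(V) ≅ {0,1}^V`. -/
noncomputable def cylTop (V : Type*) : TopologicalSpace (Set V) :=
  TopologicalSpace.induced
    (fun (S : Set V) (v : V) => @decide (v ∈ S) (Classical.propDecidable _))
    inferInstance

/-- Topological conjugacy of two self-maps with respect to given topologies. -/
def TopConj {X Y : Type*} (tX : TopologicalSpace X) (tY : TopologicalSpace Y)
    (f : X → X) (g : Y → Y) : Prop :=
  ∃ Φ : X ≃ Y, @Continuous _ _ tX tY Φ ∧ @Continuous _ _ tY tX Φ.symm ∧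
    ∀ x : X, Φ (f x) = g (Φ x)

/-- `A` positively generates the group. -/
def PosGen {Γ : Type*} [Group Γ] (A : Set Γ) : Prop :=
  ∀ g : Γ, ∃ n : ℕ, 1 ≤ n ∧ g ∈ A ^ n

/-- The Minkowski product map `φ_A(W) = W A`. -/
def phiA {Γ : Type*} [Group Γ] (A : Set Γ) (W : Set Γ) : Set Γ := W * A

/-- A right Følner sequence: nonempty finite sets `F n` with
`|F n · g \ F n| / |F n| → 0` for every `g`. -/
def IsRightFolnerSeq {Γ : Type*} [Group Γ] (F : ℕ → Set Γ) : Prop :=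
  (∀ n, (F n).Finite ∧ (F n).Nonempty) ∧
    ∀ g : Γ, Tendsto
      (fun n => ((((· * g) '' F n) \ F n).ncard : ℝ) / ((F n).ncard : ℝ))
      atTop (nhds 0)

/-- A group is amenable if it admits a right Følner sequence. -/
def AmenableGroup (Γ : Type*) [Group Γ] : Prop :=
  ∃ F : ℕ → Set Γ, IsRightFolnerSeq F

section Counting

variable {α β : Type*}

lemma encard_powerset (s : Set α) : (𝒫 s).encard = 2 ^ s.encard := by
  rw [Set.encard, ENat.card_congr (Equiv.Set.powerset s), Set, ENat.card_fun, Set.encard]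
  simp

lemma encard_mul_le {M : Type*} [Mul M] (s t : Set M) :
    (s * t).encard ≤ s.encard * t.encard := by
  simpa only [← toENat_cardinalMk, map_mul] using
    OrderHomClass.mono Cardinal.toENat (Cardinal.mk_mul_le (s := s) (t := t))

lemma finite_pow {M : Type*} [Monoid M] {A : Set M} (hA : A.Finite) (n : ℕ) : (A ^ n).Finite := by
  induction n with
  | zero => simp
  | succ n ih => rw [pow_succ]; exact ih.mul hA

lemma two_epow_strictMono : StrictMono fun x : ℕ∞ ↦ (2 : ℕ∞) ^ x := by
  intro x y hxy
  lift x to ℕ using hxy.ne_top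
  beta_reduce
  induction y with
  | top => rw [ENat.epow_top (by norm_num)]; exact_mod_cast ENat.natCast_lt_top (2 ^ x)
  | coe y => exact_mod_cast Nat.pow_lt_pow_right one_lt_two (ENat.natCast_lt_natCast.mp hxy)

lemma encard_le_two_epow_encard_sUnion (S : Set (Set α)) : S.encard ≤ 2 ^ (⋃₀ S).encard :=
  encard_powerset (⋃₀ S) ▸ encard_le_encard fun _ ↦ subset_sUnion_of_mem

lemma encard_preimage_singleton_of_semiconj {e : α ≃ β} {f : α → α} {g : β → β}
    (h : Function.Semiconj e f g) (a : α) :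
    (g ⁻¹' {e a}).encard = (f ⁻¹' {a}).encard := by
  have hfiber : e ⁻¹' (g ⁻¹' {e a}) = f ⁻¹' {a} := by
    ext x
    simp [← h x]
  rw [← hfiber, encard_preimage_of_bijective e.bijective]

end Counting

section MinkowskiProduct

variable {Γ : Type*} [Group Γ] {A S Y : Set Γ}

lemma phiA_iterate (A : Set Γ) (n : ℕ) : (phiA A)^[n] = phiA (A ^ n) := by
  induction n with
  | zero => ext1 W; simp [phiA]
  | succ n ih =>
    ext1 W
    rw [Function.iterate_succ_apply', ih, phiA, phiA, phiA, mul_assoc, pow_succ]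

lemma phiA_sUnion (S : Set Γ) (𝓦 : Set (Set Γ)) : phiA S (⋃₀ 𝓦) = ⋃ W ∈ 𝓦, phiA S W :=
  sUnion_mul 𝓦 S

lemma sUnion_phiA_fiber_mem (h : (phiA S ⁻¹' {Y}).Nonempty) :
    ⋃₀ (phiA S ⁻¹' {Y}) ∈ phiA S ⁻¹' {Y} := by
  rw [mem_preimage, mem_singleton_iff, phiA_sUnion]
  calc ⋃ W ∈ phiA S ⁻¹' {Y}, phiA S W = ⋃ W ∈ phiA S ⁻¹' {Y}, Y := iUnion₂_congr fun _ hW ↦ hW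
    _ = Y := biUnion_const h Y

lemma encard_phiA_fiber_le (h1 : 1 ∈ S) (Y : Set Γ) :
    (phiA S ⁻¹' {Y}).encard ≤ 2 ^ Y.encard := by
  rw [← encard_powerset]
  exact encard_le_encard fun W hW ↦ (subset_mul_left W h1).trans_eq hW

lemma exists_separated_net (h1 : 1 ∈ A) (S : Set Γ) :
    ∃ E ⊆ S, (E.Pairwise fun x y ↦ x⁻¹ * y ∉ A) ∧ S ⊆ E * (A ∪ A⁻¹) := by
  obtain ⟨E, hE⟩ := zorn_subset {E | E ⊆ S ∧ E.Pairwise fun x y ↦ x⁻¹ * y ∉ A}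
    fun c hc hchain ↦ ⟨⋃₀ c, ⟨sUnion_subset fun E hE ↦ (hc hE).1,
      hchain.pairwise_sUnion.mpr fun E hE ↦ (hc hE).2⟩, fun _ ↦ subset_sUnion_of_mem⟩
  refine ⟨E, hE.prop.1, hE.prop.2, fun s hs ↦ ?_⟩
  by_contra hfar
  have hnotMem : ∀ e ∈ E, e⁻¹ * s ∉ A ∪ A⁻¹ := fun e he h ↦
    hfar <| by simpa using mul_mem_mul he h
  have hinsert : insert s E ⊆ S ∧ (insert s E).Pairwise fun x y ↦ x⁻¹ * y ∉ A :=
    ⟨insert_subset hs hE.prop.1, hE.prop.2.insert fun e he _ ↦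
      ⟨fun h ↦ hnotMem e he (.inr (by simpa using h)), fun h ↦ hnotMem e he (.inl h)⟩⟩
  have hsE : s ∈ E := hE.le_of_ge hinsert (subset_insert s E) (mem_insert s E)
  exact hnotMem s hsE (.inl (by simpa using h1))

lemma phiA_sdiff {D E : Set Γ} (h1 : 1 ∈ A) (hsep : E.Pairwise fun x y ↦ x⁻¹ * y ∉ A)
    (hED : phiA A E ⊆ D) (hE : E ⊆ phiA A (D \ E)) : phiA A (D \ E) = phiA A D := by
  refine (mul_subset_mul_right sdiff_subset).antisymm ?_
  rintro _ ⟨d, hd, a, ha, rfl⟩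
  by_cases hdE : d ∈ E
  · obtain rfl | hne := eq_or_ne a 1
    · simpa only [mul_one, phiA] using hE hdE
    · have hda : d * a ∉ E := fun h ↦ hsep hdE h (by simpa using hne) (by simpa using ha)
      exact subset_mul_left _ h1 ⟨hED (mul_mem_mul hdE ha), hda⟩
  · exact mul_mem_mul ⟨hd, hdE⟩ ha

lemma exists_erasable (hA : A.Nontrivial) (h1 : 1 ∈ A) (C : Set Γ) :
    ∃ E ⊆ C * A ^ 2, C.encard ≤ E.encard * (A ∪ A⁻¹).encard ∧
      ∀ E' ⊆ E, phiA A ((C * A ^ 2) \ E') = phiA A (C * A ^ 2) := by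
  obtain ⟨a, ha, hne⟩ := hA.exists_ne 1
  -- Taking `E` inside `C * a` ensures that each erased point `c * a` is still covered by `c`.
  obtain ⟨E, hEC, hsep, hnet⟩ := exists_separated_net h1 ((· * a) '' C)
  have hCD : C ⊆ C * A ^ 2 := subset_mul_left C (one_mem_pow h1)
  have hEA : phiA A E ⊆ C * A ^ 2 := by
    rw [sq, ← mul_assoc]
    exact mul_subset_mul_right (hEC.trans (image_subset_iff.mpr fun c hc ↦ mul_mem_mul hc ha))
  refine ⟨E, (subset_mul_left E h1).trans hEA, ?_, fun E' hE' ↦ ?_⟩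
  · rw [← (mul_left_injective a).encard_image C]
    exact (encard_le_encard hnet).trans (encard_mul_le _ _)
  · refine phiA_sdiff h1 (hsep.mono hE') ((mul_subset_mul_right hE').trans hEA) fun e he ↦ ?_
    obtain ⟨c, hc, rfl⟩ := hEC (hE' he)
    have hcE : c ∉ E' := fun h ↦ hsep (hE' h) (hE' he) (by simpa using hne) (by simpa using ha)
    exact mul_mem_mul ⟨hCD hc, hcE⟩ ha

lemma two_epow_encard_le_encard_phiA_fiber_epow (hA : A.Nontrivial) (h1 : 1 ∈ A) (C : Set Γ) {n : ℕ}
    (hn : n ≠ 0) :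
    2 ^ C.encard ≤ (phiA (A ^ n) ⁻¹' {C * A ^ (n + 2)}).encard ^ (A ∪ A⁻¹).encard := by
  obtain ⟨E, hED, hcard, herase⟩ := exists_erasable hA h1 C
  obtain ⟨k, rfl⟩ := Nat.exists_eq_succ_of_ne_zero hn
  have hmaps : MapsTo (fun E' ↦ (C * A ^ 2) \ E') (𝒫 E)
      (phiA (A ^ (k + 1)) ⁻¹' {C * A ^ (k + 1 + 2)}) := fun E' hE' ↦ by
    calc ((C * A ^ 2) \ E') * A ^ (k + 1)
        = ((C * A ^ 2) \ E') * A * A ^ k := by rw [pow_succ' A k, mul_assoc]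
      _ = C * A ^ 2 * A * A ^ k := congrArg (· * A ^ k) (herase E' hE')
      _ = C * A ^ (k + 1 + 2) := by rw [mul_assoc, mul_assoc, ← pow_succ', ← pow_add, add_comm]
  have hinj : InjOn (fun E' ↦ (C * A ^ 2) \ E') (𝒫 E) := fun s hs t ht hst ↦
    (sdiff_right_inj (hs.trans hED) (ht.trans hED)).mp hst
  calc (2 : ℕ∞) ^ C.encard
      ≤ 2 ^ (E.encard * (A ∪ A⁻¹).encard) := two_epow_strictMono.monotone hcard
    _ = (𝒫 E).encard ^ (A ∪ A⁻¹).encard := by rw [ENat.epow_mul, encard_powerset]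
    _ ≤ _ := ENat.epow_left_mono (encard_le_encard_of_injOn hmaps hinj)

end MinkowskiProduct

section Folner

variable {Γ : Type*} [Group Γ] {A F S : Set Γ}

/-- The proportion of the set `F` that right translation by `g` moves out of `F`. A right Følner
sequence is one along which this tends to `0` for every `g`. -/
noncomputable def escapeRatio (F : Set Γ) (g : Γ) : ℝ :=
  (((· * g) '' F \ F).ncard : ℝ) / (F.ncard : ℝ)

/-- The Følner condition relative to a set `S`: some nonempty finite sets `F` are almost invariant
under right multiplication by `S`, in the sense that `|F S| / |F|` is arbitrarily close to `1`. -/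
def FolnerCondition (S : Set Γ) : Prop :=
  ∀ ε : ℝ, 0 < ε → ∃ F : Set Γ, F.Finite ∧ F.Nonempty ∧
    ((F * S).ncard : ℝ) ≤ (1 + ε) * F.ncard

lemma escapeRatio_nonneg (F : Set Γ) (g : Γ) : 0 ≤ escapeRatio F g := by
  unfold escapeRatio
  positivity

lemma escapeRatio_one (F : Set Γ) : escapeRatio F 1 = 0 := by
  simp [escapeRatio]

lemma escapeRatio_mul_ncard (hF : F.Finite) (g : Γ) :
    escapeRatio F g * F.ncard = ((· * g) '' F \ F).ncard := by
  refine div_mul_cancel_of_imp fun h ↦ ?_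
  have hF0 : F = ∅ := (ncard_eq_zero hF).mp (by exact_mod_cast h)
  simp [hF0]

lemma escapeRatio_mul_le (hF : F.Finite) (g h : Γ) :
    escapeRatio F (g * h) ≤ escapeRatio F g + escapeRatio F h := by
  have hsub : (· * (g * h)) '' F \ F ⊆ (· * h) '' ((· * g) '' F \ F) ∪ ((· * h) '' F \ F) := by
    rintro _ ⟨⟨f, hf, rfl⟩, hfgh⟩
    by_cases hfg : f * g ∈ F
    · exact .inr ⟨⟨f * g, hfg, mul_assoc f g h⟩, hfgh⟩
    · exact .inl ⟨f * g, ⟨⟨f, hf, rfl⟩, hfg⟩, mul_assoc f g h⟩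
  have hfin (x : Γ) : ((· * x) '' F \ F).Finite := (hF.image _).sdiff
  have hcard : ((· * (g * h)) '' F \ F).ncard ≤
      ((· * g) '' F \ F).ncard + ((· * h) '' F \ F).ncard :=
    calc _ ≤ _ := ncard_le_ncard hsub (((hfin g).image _).union (hfin h))
      _ ≤ _ := ncard_union_le _ _
      _ = _ := by rw [ncard_image_of_injective _ (mul_left_injective h)]
  rw [escapeRatio, escapeRatio, escapeRatio, ← add_div]
  gcongr
  exact_mod_cast hcard

lemma ncard_mul_le_one_add_sum_escapeRatio_mul (hF : F.Finite) (S : Finset Γ) :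
    ((F * S).ncard : ℝ) ≤ (1 + ∑ g ∈ S, escapeRatio F g) * F.ncard := by
  have hsub : F * S ⊆ F ∪ ⋃ g ∈ S, ((· * g) '' F \ F) := by
    rintro _ ⟨f, hf, g, hg, rfl⟩
    by_cases hfg : f * g ∈ F
    · exact .inl hfg
    · exact .inr (mem_biUnion (x := g) hg ⟨⟨f, hf, rfl⟩, hfg⟩)
  have hfin : (⋃ g ∈ S, ((· * g) '' F \ F)).Finite :=
    S.finite_toSet.biUnion fun g _ ↦ (hF.image _).sdiff
  have hcard : (F * S).ncard ≤ F.ncard + ∑ g ∈ S, ((· * g) '' F \ F).ncard :=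
    calc _ ≤ _ := ncard_le_ncard hsub (hF.union hfin)
      _ ≤ _ := ncard_union_le _ _
      _ ≤ _ := by gcongr; exact S.set_ncard_biUnion_le _
  rw [one_add_mul, Finset.sum_mul]
  simp only [escapeRatio_mul_ncard hF]
  exact_mod_cast hcard

lemma escapeRatio_le_of_ncard_mul_le (hF : F.Finite) (hA : A.Finite) (h1 : 1 ∈ A) {ε : ℝ}
    (hε : 0 ≤ ε) (h : ((F * A).ncard : ℝ) ≤ (1 + ε) * F.ncard) {g : Γ} (hg : g ∈ A) :
    escapeRatio F g ≤ ε := by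
  have hFA : (F * A).Finite := hF.mul hA
  have hsub : (· * g) '' F \ F ⊆ (F * A) \ F :=
    sdiff_subset_sdiff_left (image_subset_iff.mpr fun f hf ↦ mul_mem_mul hf hg)
  have hcard : ((· * g) '' F \ F).ncard + F.ncard ≤ (F * A).ncard :=
    calc _ ≤ ((F * A) \ F).ncard + F.ncard := by gcongr; exact hFA.sdiff
      _ = _ := ncard_sdiff_add_ncard_of_subset (subset_mul_left F h1) hFA
  have hcard' : (((· * g) '' F \ F).ncard : ℝ) + F.ncard ≤ (F * A).ncard := by
    exact_mod_cast hcard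
  exact div_le_of_le_mul₀ (Nat.cast_nonneg _) hε (by linarith)

lemma AmenableGroup.folnerCondition (h : AmenableGroup Γ) (hS : S.Finite) : FolnerCondition S := by
  intro ε hε
  lift S to Finset Γ using hS
  obtain ⟨F, hF, hlim⟩ := h
  have hsum : Tendsto (fun n ↦ ∑ g ∈ S, escapeRatio (F n) g) atTop (nhds 0) := by
    simpa only [Finset.sum_const_zero] using
      tendsto_finsetSum (f := fun g n ↦ escapeRatio (F n) g) S fun g _ ↦ hlim g
  obtain ⟨n, hn⟩ := (hsum.eventually_lt_const hε).exists
  refine ⟨F n, (hF n).1, (hF n).2, ?_⟩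
  calc ((F n * S).ncard : ℝ)
      ≤ (1 + ∑ g ∈ S, escapeRatio (F n) g) * (F n).ncard :=
        ncard_mul_le_one_add_sum_escapeRatio_mul (hF n).1 S
    _ ≤ (1 + ε) * (F n).ncard := by gcongr

lemma folnerCondition_of_subsingleton (hS : S.Subsingleton) : FolnerCondition S := fun ε hε ↦ by
  refine ⟨{1}, finite_singleton 1, singleton_nonempty 1, ?_⟩
  have hcard : (({1} * S).ncard : ℝ) ≤ 1 := by
    rw [singleton_mul]
    have hcoset : ((1 * ·) '' S).Subsingleton := hS.image _
    exact_mod_cast (ncard_le_one hcoset.finite).mpr hcoset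
  rw [ncard_singleton, Nat.cast_one]
  linarith

lemma PosGen.closure_eq_top (hgen : PosGen A) : Submonoid.closure A = ⊤ := by
  refine eq_top_iff.mpr fun g _ ↦ ?_
  obtain ⟨n, -, hg⟩ := hgen g
  exact Submonoid.pow_subset Submonoid.subset_closure hg

lemma FolnerCondition.amenableGroup (h : FolnerCondition A) (hA : A.Finite) (h1 : 1 ∈ A)
    (hgen : PosGen A) : AmenableGroup Γ := by
  choose F hfin hne hcard using fun n : ℕ ↦ h (1 / ((n : ℝ) + 1)) Nat.one_div_pos_of_nat
  refine ⟨F, fun n ↦ ⟨hfin n, hne n⟩, fun g ↦ ?_⟩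
  change Tendsto (fun n ↦ escapeRatio (F n) g) atTop (nhds 0)
  induction g using Submonoid.dense_induction A hgen.closure_eq_top with
  | mem a ha =>
    exact squeeze_zero (fun n ↦ escapeRatio_nonneg (F n) a)
      (fun n ↦ escapeRatio_le_of_ncard_mul_le (hfin n) hA h1 (by positivity) (hcard n) ha)
      tendsto_one_div_add_atTop_nhds_zero_nat
  | one => simp only [escapeRatio_one, tendsto_const_nhds]
  | mul g h hg hh =>
    exact squeeze_zero (fun n ↦ escapeRatio_nonneg (F n) (g * h))
      (fun n ↦ escapeRatio_mul_le (hfin n) g h) (by simpa using hg.add hh)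

lemma folnerCondition_of_ncard_mul_pow_le (hA : A.Finite) (hne : A.Nonempty) {L : ℝ}
    (h : ∀ j : ℕ, ∃ X : Set Γ, X.Finite ∧ X.Nonempty ∧ ((X * A ^ j).ncard : ℝ) ≤ L * X.ncard) :
    FolnerCondition A := by
  intro ε hε
  by_contra! hcon
  obtain ⟨j, hj⟩ := pow_unbounded_of_one_lt L (lt_add_of_pos_right 1 hε)
  obtain ⟨X, hX, hXne, hle⟩ := h j
  have hgrowth (i : ℕ) : (1 + ε) ^ i * X.ncard ≤ (X * A ^ i).ncard := by
    induction i with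
    | zero => simp
    | succ i ih =>
      calc (1 + ε) ^ (i + 1) * (X.ncard : ℝ)
          = (1 + ε) * ((1 + ε) ^ i * X.ncard) := by ring
        _ ≤ (1 + ε) * (X * A ^ i).ncard := by gcongr
        _ ≤ (X * A ^ i * A).ncard := (hcon _ (hX.mul (finite_pow hA i)) (hXne.mul hne.pow)).le
        _ = (X * A ^ (i + 1)).ncard := by rw [pow_succ, mul_assoc]
  have hpos : (0 : ℝ) < X.ncard := by exact_mod_cast (ncard_pos hX).mpr hXne
  exact hj.not_ge (le_of_mul_le_mul_right ((hgrowth j).trans hle) hpos)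

end Folner

section Conjugacy

variable {Γ₁ Γ₂ : Type*} [Group Γ₁] [Group Γ₂] {A₁ : Set Γ₁} {A₂ : Set Γ₂}
  {Φ : Set Γ₁ ≃ Set Γ₂}

lemma semiconj_phiA_pow (hΦ : Function.Semiconj Φ (phiA A₁) (phiA A₂)) (n : ℕ) :
    Function.Semiconj Φ (phiA (A₁ ^ n)) (phiA (A₂ ^ n)) := by
  simpa only [phiA_iterate] using hΦ.iterate_right n

lemma nontrivial_of_semiconj (hΦ : Function.Semiconj Φ (phiA A₁) (phiA A₂)) (hone₁ : 1 ∈ A₁)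
    (hnt₂ : A₂.Nontrivial) : A₁.Nontrivial := by
  by_contra hnt₁
  obtain rfl : A₁ = 1 := (not_nontrivial_iff.mp hnt₁).eq_singleton_of_mem hone₁
  have hA₂_one : A₂ = 1 := by simpa [phiA] using (hΦ (Φ.symm 1)).symm
  exact not_nontrivial_singleton (hA₂_one ▸ hnt₂)

lemma encard_le_encard_mul_of_semiconj (hΦ : Function.Semiconj Φ (phiA A₁) (phiA A₂))
    (hone₁ : 1 ∈ A₁) (hnt₂ : A₂.Nontrivial) (hone₂ : 1 ∈ A₂)
    {W : Set Γ₂} {Y : Set Γ₁} (hW : W * A₂ ^ 3 = Φ Y) :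
    W.encard ≤ Y.encard * (A₂ ∪ A₂⁻¹).encard := by
  refine two_epow_strictMono.le_iff_le.mp ?_
  calc (2 : ℕ∞) ^ W.encard
      ≤ (phiA (A₂ ^ 1) ⁻¹' {Φ Y}).encard ^ (A₂ ∪ A₂⁻¹).encard :=
        hW ▸ two_epow_encard_le_encard_phiA_fiber_epow hnt₂ hone₂ W one_ne_zero
    _ = (phiA (A₁ ^ 1) ⁻¹' {Y}).encard ^ (A₂ ∪ A₂⁻¹).encard := by
        rw [encard_preimage_singleton_of_semiconj (semiconj_phiA_pow hΦ 1)]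
    _ ≤ (2 ^ Y.encard) ^ (A₂ ∪ A₂⁻¹).encard :=
        ENat.epow_left_mono (encard_phiA_fiber_le (one_mem_pow hone₁) Y)
    _ = 2 ^ (Y.encard * (A₂ ∪ A₂⁻¹).encard) := ENat.epow_mul.symm

lemma encard_le_encard_sUnion_fiber_mul_of_semiconj (hΦ : Function.Semiconj Φ (phiA A₁) (phiA A₂))
    (hnt₁ : A₁.Nontrivial) (hone₁ : 1 ∈ A₁) (C : Set Γ₁) {n : ℕ} (hn : n ≠ 0) :
    C.encard ≤
      (⋃₀ (phiA (A₂ ^ n) ⁻¹' {Φ (C * A₁ ^ (n + 2))})).encard * (A₁ ∪ A₁⁻¹).encard := by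
  refine two_epow_strictMono.le_iff_le.mp ?_
  rw [ENat.epow_mul]
  refine (two_epow_encard_le_encard_phiA_fiber_epow hnt₁ hone₁ C hn).trans (ENat.epow_left_mono ?_)
  rw [← encard_preimage_singleton_of_semiconj (semiconj_phiA_pow hΦ n)]
  exact encard_le_two_epow_encard_sUnion _

lemma exists_encard_mul_pow_le (hΦ : Function.Semiconj Φ (phiA A₁) (phiA A₂))
    (hone₁ : 1 ∈ A₁) (hnt₂ : A₂.Nontrivial) (hone₂ : 1 ∈ A₂) (C : Set Γ₁) (j : ℕ) :
    ∃ X : Set Γ₂, C.encard ≤ X.encard * (A₁ ∪ A₁⁻¹).encard ∧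
      (X * A₂ ^ j).encard ≤ (C * A₁ ^ (j + 5)).encard * (A₂ ∪ A₂⁻¹).encard := by
  have hne : (phiA (A₂ ^ (j + 3)) ⁻¹' {Φ (C * A₁ ^ (j + 5))}).Nonempty := by
    refine ⟨Φ (C * A₁ ^ 2), ?_⟩
    rw [mem_preimage, ← semiconj_phiA_pow hΦ, phiA, mul_assoc, ← pow_add, add_comm 2]
    rfl
  have hnt₁ : A₁.Nontrivial := nontrivial_of_semiconj hΦ hone₁ hnt₂
  refine ⟨⋃₀ (phiA (A₂ ^ (j + 3)) ⁻¹' {Φ (C * A₁ ^ (j + 5))}),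
    encard_le_encard_sUnion_fiber_mul_of_semiconj hΦ hnt₁ hone₁ C (by positivity),
    encard_le_encard_mul_of_semiconj hΦ hone₁ hnt₂ hone₂ ?_⟩
  rw [mul_assoc, ← pow_add]
  exact sUnion_phiA_fiber_mem hne

lemma exists_ncard_mul_pow_le (hΦ : Function.Semiconj Φ (phiA A₁) (phiA A₂))
    (hfin₁ : A₁.Finite) (hone₁ : 1 ∈ A₁) (hfin₂ : A₂.Finite) (hnt₂ : A₂.Nontrivial) (hone₂ : 1 ∈ A₂)
    {C : Set Γ₁} (hC : C.Finite) (hCne : C.Nonempty) (j : ℕ) :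
    ∃ X : Set Γ₂, X.Finite ∧ X.Nonempty ∧ C.ncard ≤ X.ncard * (A₁ ∪ A₁⁻¹).ncard ∧
      (X * A₂ ^ j).ncard ≤ (C * A₁ ^ (j + 5)).ncard * (A₂ ∪ A₂⁻¹).ncard := by
  obtain ⟨X, hCX, hXj⟩ := exists_encard_mul_pow_le hΦ hone₁ hnt₂ hone₂ C j
  have hY : (C * A₁ ^ (j + 5)).Finite := hC.mul (finite_pow hfin₁ (j + 5))
  have hK₁ : (A₁ ∪ A₁⁻¹).Finite := hfin₁.union hfin₁.inv
  have hK₂ : (A₂ ∪ A₂⁻¹).Finite := hfin₂.union hfin₂.inv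
  rw [← hY.cast_ncard_eq, ← hK₂.cast_ncard_eq, ← Nat.cast_mul] at hXj
  have hXA : (X * A₂ ^ j).Finite := finite_of_encard_le_coe hXj
  have hX : X.Finite := hXA.subset (subset_mul_left X (one_mem_pow hone₂))
  rw [← hC.cast_ncard_eq, ← hX.cast_ncard_eq, ← hK₁.cast_ncard_eq] at hCX
  rw [← hXA.cast_ncard_eq] at hXj
  norm_cast at hCX hXj
  have hXpos : 0 < X.ncard :=
    Nat.pos_of_mul_pos_right (((ncard_pos hC).mpr hCne).trans_le hCX)
  exact ⟨X, hX, (ncard_pos hX).mp hXpos, hCX, hXj⟩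

end Conjugacy

theorem amenable_of_topConj_general {Γ₁ Γ₂ : Type*} [Group Γ₁] [Group Γ₂]
    {A₁ : Set Γ₁} (hfin₁ : A₁.Finite) (hone₁ : (1 : Γ₁) ∈ A₁)
    {A₂ : Set Γ₂} (hfin₂ : A₂.Finite) (hone₂ : (1 : Γ₂) ∈ A₂) (hgen₂ : PosGen A₂)
    {Φ : Set Γ₁ ≃ Set Γ₂} (hΦ : Function.Semiconj Φ (phiA A₁) (phiA A₂))
    (ham : AmenableGroup Γ₁) :
    AmenableGroup Γ₂ := by
  suffices h : FolnerCondition A₂ from h.amenableGroup hfin₂ hone₂ hgen₂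
  obtain hsub₂ | hnt₂ := A₂.subsingleton_or_nontrivial
  · exact folnerCondition_of_subsingleton hsub₂
  set K₁ := (A₁ ∪ A₁⁻¹).ncard
  set K₂ := (A₂ ∪ A₂⁻¹).ncard
  refine folnerCondition_of_ncard_mul_pow_le (L := 2 * K₁ * K₂) hfin₂ ⟨1, hone₂⟩ fun j ↦ ?_
  obtain ⟨C, hC, hCne, hCcard⟩ := ham.folnerCondition (finite_pow hfin₁ (j + 5)) 1 one_pos
  obtain ⟨X, hX, hXne, hCX, hXj⟩ :=
    exists_ncard_mul_pow_le hΦ hfin₁ hone₁ hfin₂ hnt₂ hone₂ hC hCne j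
  refine ⟨X, hX, hXne, ?_⟩
  calc ((X * A₂ ^ j).ncard : ℝ)
      ≤ (C * A₁ ^ (j + 5)).ncard * K₂ := by exact_mod_cast hXj
    _ ≤ (1 + 1) * C.ncard * K₂ := by gcongr
    _ ≤ (1 + 1) * (X.ncard * K₁) * K₂ := by gcongr; exact_mod_cast hCX
    _ = 2 * K₁ * K₂ * X.ncard := by ring

/-- Amenability is recognizable from the dynamics: if `φ_{A₁}` and `φ_{A₂}`
are topologically conjugate and `Γ₁` is amenable, then so is `Γ₂`. -/
theorem amenable_of_topConj {Γ₁ Γ₂ : Type*} [Group Γ₁] [Group Γ₂]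
    [Countable Γ₁] [Infinite Γ₁] [Countable Γ₂] [Infinite Γ₂]
    (A₁ : Set Γ₁) (hfin₁ : A₁.Finite) (hone₁ : (1 : Γ₁) ∈ A₁)
    (hgen₁ : PosGen A₁)
    (A₂ : Set Γ₂) (hfin₂ : A₂.Finite) (hone₂ : (1 : Γ₂) ∈ A₂)
    (hgen₂ : PosGen A₂)
    (hconj : TopConj (cylTop Γ₁) (cylTop Γ₂) (phiA A₁) (phiA A₂))
    (ham : AmenableGroup Γ₁) :
    AmenableGroup Γ₂ := by
  obtain ⟨Φ, -, -, hΦ⟩ := hconj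
  exact amenable_of_topConj_general hfin₁ hone₁ hfin₂ hone₂ hgen₂ hΦ ham
end
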